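/- arXiv:math/0508064 — 3 statements merged into one kernel-verified Lean document; each statement's English description precedes it below -/
import Mathlib

section
/- Fix an integer n ≥ 2 and work in R = ℚ[x₁, x₂, x₃, x₄]. Set π₁₃ = Σ_{a+b=n, a,b≥0} x₁^a x₃^b and π₂₄ = Σ_{a+b=n, a,b≥0} x₂^a x₄^b, and define the 2×2 matrices over R: P₀ = [[π₁₃, x₂ − x₄], [π₂₄, −x₁ + x₃]] and P₁ = [[x₁ − x₃, x₂ − x₄], [π₂₄, −π₁₃]]. Then P₁·P₀ = P₀·P₁ = (x₁^{n+1} + x₂^{n+1} − x₃^{n+1} − x₄^{n+1})·I₂, where I₂ is the 2×2 identity matrix; i.e., the pair (P₀, P₁) is a matrix factorization of the potential x₁^{n+1} + x₂^{n+1} − x₃^{n+1} − x₄^{n+1}. -/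
open MvPolynomial

/-- Telescoping identity for the complete homogeneous sum in two variables. -/
theorem antidiag_telescope {R : Type*} [CommRing R] (x y : R) (n : ℕ) :
    (x - y) * ∑ p ∈ Finset.HasAntidiagonal.antidiagonal n, x ^ p.1 * y ^ p.2
      = x ^ (n + 1) - y ^ (n + 1) := by
  induction n with
  | zero => simp
  | succ k ih =>
    rw [Finset.Nat.sum_antidiagonal_succ']
    have h : ∑ p ∈ Finset.HasAntidiagonal.antidiagonal k, x ^ p.1 * y ^ (p.2 + 1)
        = y * ∑ p ∈ Finset.HasAntidiagonal.antidiagonal k, x ^ p.1 * y ^ p.2 := by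
      rw [Finset.mul_sum]
      exact Finset.sum_congr rfl fun p _ => by ring
    simp only [h]
    linear_combination y * ih

theorem P_matrix_factorization (n : ℕ) (hn : 2 ≤ n)
    (π₁₃ π₂₄ : MvPolynomial (Fin 4) ℚ)
    (h₁₃ : π₁₃ = ∑ p ∈ Finset.HasAntidiagonal.antidiagonal n, X 0 ^ p.1 * X 2 ^ p.2)
    (h₂₄ : π₂₄ = ∑ p ∈ Finset.HasAntidiagonal.antidiagonal n, X 1 ^ p.1 * X 3 ^ p.2)
    (P₀ P₁ : Matrix (Fin 2) (Fin 2) (MvPolynomial (Fin 4) ℚ))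
    (hP₀ : P₀ = !![π₁₃, X 1 - X 3; π₂₄, -X 0 + X 2])
    (hP₁ : P₁ = !![X 0 - X 2, X 1 - X 3; π₂₄, -π₁₃]) :
    P₁ * P₀ = ((X 0 : MvPolynomial (Fin 4) ℚ) ^ (n + 1) + X 1 ^ (n + 1)
          - X 2 ^ (n + 1) - X 3 ^ (n + 1)) • (1 : Matrix (Fin 2) (Fin 2) (MvPolynomial (Fin 4) ℚ)) ∧
    P₀ * P₁ = ((X 0 : MvPolynomial (Fin 4) ℚ) ^ (n + 1) + X 1 ^ (n + 1)
          - X 2 ^ (n + 1) - X 3 ^ (n + 1)) • (1 : Matrix (Fin 2) (Fin 2) (MvPolynomial (Fin 4) ℚ)) := by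
  have e₁ := antidiag_telescope (X 0 : MvPolynomial (Fin 4) ℚ) (X 2) n
  have e₂ := antidiag_telescope (X 1 : MvPolynomial (Fin 4) ℚ) (X 3) n
  rw [← h₁₃] at e₁
  rw [← h₂₄] at e₂
  clear h₁₃ h₂₄
  subst hP₀ hP₁
  constructor
  · ext1 i j
    fin_cases i <;> fin_cases j <;> simp [Matrix.mul_apply, Fin.sum_univ_two]
    · linear_combination e₁ + e₂
    · ring
    · ring
    · linear_combination e₁ + e₂
  · ext1 i j
    fin_cases i <;> fin_cases j <;> simp [Matrix.mul_apply, Fin.sum_univ_two]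
    · linear_combination e₁ + e₂
    · ring
    · ring
    · linear_combination e₁ + e₂
end

section
/- Fix an integer n ≥ 2 and let g ∈ ℚ[s, e] be the unique two-variable polynomial with g(X + Y, X·Y) = X^{n+1} + Y^{n+1}. Let u₁, u₂ ∈ R = ℚ[x₁, x₂, x₃, x₄] satisfy u₁·(x₁ + x₂ − x₃ − x₄) = g(x₁ + x₂, x₁x₂) − g(x₃ + x₄, x₁x₂) and u₂·(x₁x₂ − x₃x₄) = g(x₃ + x₄, x₁x₂) − g(x₃ + x₄, x₃x₄), and set π₂₄ = Σ_{a+b=n, a,b≥0} x₂^a x₄^b. Then x₁ − x₃ divides u₁ + x₁u₂ − π₂₄ in R; in particular a₁ := −u₂ + (u₁ + x₁u₂ − π₂₄)/(x₁ − x₃) is a polynomial in R. -/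
open MvPolynomial

lemma dvd_sub_subst (p : MvPolynomial (Fin 4) ℚ) :
    (X 0 - X 2 : MvPolynomial (Fin 4) ℚ) ∣
      p - aeval ![(X 2 : MvPolynomial (Fin 4) ℚ), X 1, X 2, X 3] p := by
  rw [← Ideal.mem_span_singleton, ← Ideal.Quotient.eq]
  have h : (Ideal.Quotient.mkₐ ℚ (Ideal.span {(X 0 - X 2 : MvPolynomial (Fin 4) ℚ)}))
      = (Ideal.Quotient.mkₐ ℚ (Ideal.span {(X 0 - X 2 : MvPolynomial (Fin 4) ℚ)})).comp
        (aeval ![(X 2 : MvPolynomial (Fin 4) ℚ), X 1, X 2, X 3]) := by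
    apply MvPolynomial.algHom_ext
    intro i
    fin_cases i
    · simp [Ideal.Quotient.eq, Ideal.mem_span_singleton]
    all_goals simp
  exact DFunLike.congr_fun h p

lemma aeval_power_sum (n : ℕ) (g : MvPolynomial (Fin 2) ℚ)
    (hg : aeval ![(X 0 : MvPolynomial (Fin 2) ℚ) + X 1, X 0 * X 1] g
        = (X 0 : MvPolynomial (Fin 2) ℚ) ^ (n + 1) + X 1 ^ (n + 1))
    (a b : MvPolynomial (Fin 4) ℚ) :
    aeval ![a + b, a * b] g = a ^ (n + 1) + b ^ (n + 1) := by
  have h := congrArg (aeval ![a, b]) hg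
  have e : (aeval ![a, b]).comp (aeval ![(X 0 : MvPolynomial (Fin 2) ℚ) + X 1, X 0 * X 1])
      = aeval ![a + b, a * b] := by
    apply MvPolynomial.algHom_ext
    intro i
    fin_cases i <;> simp
  rw [← AlgHom.comp_apply, e] at h
  simpa using h

theorem a1_is_polynomial (n : ℕ) (hn : 2 ≤ n)
    (g : MvPolynomial (Fin 2) ℚ)
    (hg : aeval ![(X 0 : MvPolynomial (Fin 2) ℚ) + X 1, X 0 * X 1] g
        = (X 0 : MvPolynomial (Fin 2) ℚ) ^ (n + 1) + X 1 ^ (n + 1))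
    (u₁ u₂ : MvPolynomial (Fin 4) ℚ)
    (hu₁ : u₁ * (X 0 + X 1 - X 2 - X 3)
        = aeval ![(X 0 : MvPolynomial (Fin 4) ℚ) + X 1, X 0 * X 1] g
          - aeval ![(X 2 : MvPolynomial (Fin 4) ℚ) + X 3, X 0 * X 1] g)
    (hu₂ : u₂ * (X 0 * X 1 - X 2 * X 3)
        = aeval ![(X 2 : MvPolynomial (Fin 4) ℚ) + X 3, X 0 * X 1] g
          - aeval ![(X 2 : MvPolynomial (Fin 4) ℚ) + X 3, X 2 * X 3] g)
    (π₂₄ : MvPolynomial (Fin 4) ℚ)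
    (h₂₄ : π₂₄ = ∑ p ∈ Finset.HasAntidiagonal.antidiagonal n, X 1 ^ p.1 * X 3 ^ p.2) :
    (X 0 - X 2 : MvPolynomial (Fin 4) ℚ) ∣ (u₁ + X 0 * u₂ - π₂₄) := by
  have hpi : π₂₄ * (X 1 - X 3) = X 1 ^ (n + 1) - X 3 ^ (n + 1) := by
    rw [h₂₄, Finset.Nat.sum_antidiagonal_eq_sum_range_succ_mk]
    have := Commute.geom_sum₂_mul (Commute.all (X 1 : MvPolynomial (Fin 4) ℚ) (X 3)) (n + 1)
    simpa using this
  rw [aeval_power_sum n g hg] at hu₁ hu₂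
  have key : (u₁ + X 0 * u₂ - π₂₄) * (X 1 - X 3)
      = X 0 ^ (n + 1) - X 2 ^ (n + 1) - (u₁ + u₂ * X 3) * (X 0 - X 2) := by
    linear_combination hu₁ + hu₂ - hpi
  have h := congrArg (aeval ![(X 2 : MvPolynomial (Fin 4) ℚ), X 1, X 2, X 3]) key
  have h13 : (X 1 - X 3 : MvPolynomial (Fin 4) ℚ) ≠ 0 := by
    rw [sub_ne_zero]
    intro h
    exact absurd (X_injective h) (by decide)
  have h0 : aeval ![(X 2 : MvPolynomial (Fin 4) ℚ), X 1, X 2, X 3] (u₁ + X 0 * u₂ - π₂₄) = 0 := by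
    rw [map_mul] at h
    generalize aeval ![(X 2 : MvPolynomial (Fin 4) ℚ), X 1, X 2, X 3] (u₁ + X 0 * u₂ - π₂₄) = q at h
    simp at h
    exact h.resolve_right h13
  have := dvd_sub_subst (u₁ + X 0 * u₂ - π₂₄)
  rwa [h0, sub_zero] at this
end

section
/- Fix an integer n ≥ 2 and let g ∈ ℚ[s, e] be the unique two-variable polynomial with g(X + Y, X·Y) = X^{n+1} + Y^{n+1}. In R = ℚ[x₁, x₂, x₃, x₄], set π₁₃ = Σ_{a+b=n, a,b≥0} x₁^a x₃^b and π₂₄ = Σ_{a+b=n, a,b≥0} x₂^a x₄^b, let u₁, u₂ ∈ R satisfy u₁·(x₁ + x₂ − x₃ − x₄) = g(x₁ + x₂, x₁x₂) − g(x₃ + x₄, x₁x₂) and u₂·(x₁x₂ − x₃x₄) = g(x₃ + x₄, x₁x₂) − g(x₃ + x₄, x₃x₄), and let a₁ ∈ R satisfy (x₁ − x₃)·(a₁ + u₂) = u₁ + x₁u₂ − π₂₄. Define P₀ = [[π₁₃, x₂ − x₄], [π₂₄, −x₁ + x₃]], P₁ = [[x₁ − x₃, x₂ − x₄], [π₂₄,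 −π₁₃]], Q₀ = [[u₁, x₁x₂ − x₃x₄], [u₂, −x₁ − x₂ + x₃ + x₄]], Q₁ = [[x₁ + x₂ − x₃ − x₄, x₁x₂ − x₃x₄], [u₂, −u₁]], U₀ = [[x₃ − x₂, 0], [a₁, 1]], and U₁ = [[x₃, −x₂], [−1, 1]]. Then U₁·P₀ = Q₀·U₀ and U₀·P₁ = Q₁·U₁; i.e., the pair (U₀, U₁) is a homomorphism of matrix factorizations from (P₀, P₁) to (Q₀, Q₁). -/
open MvPolynomial

theorem geom_aux {S : Type*} [CommRing S] (n : ℕ) (x y : S) :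
    (∑ p ∈ Finset.HasAntidiagonal.antidiagonal n, x ^ p.1 * y ^ p.2) * (x - y)
      = x ^ (n + 1) - y ^ (n + 1) := by
  rw [Finset.Nat.sum_antidiagonal_eq_sum_range_succ (fun i j => x ^ i * y ^ j)]
  have h := (Commute.all x y).geom_sum₂_mul (n + 1)
  rw [← h]
  simp

theorem subst_aux (n : ℕ) (g : MvPolynomial (Fin 2) ℚ)
    (hg : aeval ![(X 0 : MvPolynomial (Fin 2) ℚ) + X 1, X 0 * X 1] g
        = (X 0 : MvPolynomial (Fin 2) ℚ) ^ (n + 1) + X 1 ^ (n + 1))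
    (p q : MvPolynomial (Fin 4) ℚ) :
    aeval ![p + q, p * q] g = p ^ (n + 1) + q ^ (n + 1) := by
  have h := congrArg (aeval ![p, q]) hg
  rw [← AlgHom.comp_apply, comp_aeval] at h
  have e : (fun i => (aeval ![p, q])
      ((![(X 0 : MvPolynomial (Fin 2) ℚ) + X 1, X 0 * X 1] : Fin 2 → _) i))
      = ![p + q, p * q] := by
    funext i
    fin_cases i <;> simp
  rw [e] at h
  simpa using h

theorem chi0_hom_of_matrix_factorizations (n : ℕ) (hn : 2 ≤ n)
    (g : MvPolynomial (Fin 2) ℚ)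
    (hg : aeval ![(X 0 : MvPolynomial (Fin 2) ℚ) + X 1, X 0 * X 1] g
        = (X 0 : MvPolynomial (Fin 2) ℚ) ^ (n + 1) + X 1 ^ (n + 1))
    (π₁₃ π₂₄ : MvPolynomial (Fin 4) ℚ)
    (h₁₃ : π₁₃ = ∑ p ∈ Finset.HasAntidiagonal.antidiagonal n, X 0 ^ p.1 * X 2 ^ p.2)
    (h₂₄ : π₂₄ = ∑ p ∈ Finset.HasAntidiagonal.antidiagonal n, X 1 ^ p.1 * X 3 ^ p.2)
    (u₁ u₂ : MvPolynomial (Fin 4) ℚ)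
    (hu₁ : u₁ * (X 0 + X 1 - X 2 - X 3)
        = aeval ![(X 0 : MvPolynomial (Fin 4) ℚ) + X 1, X 0 * X 1] g
          - aeval ![(X 2 : MvPolynomial (Fin 4) ℚ) + X 3, X 0 * X 1] g)
    (hu₂ : u₂ * (X 0 * X 1 - X 2 * X 3)
        = aeval ![(X 2 : MvPolynomial (Fin 4) ℚ) + X 3, X 0 * X 1] g
          - aeval ![(X 2 : MvPolynomial (Fin 4) ℚ) + X 3, X 2 * X 3] g)
    (a₁ : MvPolynomial (Fin 4) ℚ)
    (ha₁ : (X 0 - X 2) * (a₁ + u₂) = u₁ + X 0 * u₂ - π₂₄)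
    (P₀ P₁ Q₀ Q₁ U₀ U₁ : Matrix (Fin 2) (Fin 2) (MvPolynomial (Fin 4) ℚ))
    (hP₀ : P₀ = !![π₁₃, X 1 - X 3; π₂₄, -X 0 + X 2])
    (hP₁ : P₁ = !![X 0 - X 2, X 1 - X 3; π₂₄, -π₁₃])
    (hQ₀ : Q₀ = !![u₁, X 0 * X 1 - X 2 * X 3; u₂, -X 0 - X 1 + X 2 + X 3])
    (hQ₁ : Q₁ = !![X 0 + X 1 - X 2 - X 3, X 0 * X 1 - X 2 * X 3; u₂, -u₁])
    (hU₀ : U₀ = !![X 2 - X 1, 0; a₁, 1])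
    (hU₁ : U₁ = !![X 2, -X 1; -1, 1]) :
    U₁ * P₀ = Q₀ * U₀ ∧ U₀ * P₁ = Q₁ * U₁ := by
  have hW : u₁ * (X 0 + X 1 - X 2 - X 3) + u₂ * (X 0 * X 1 - X 2 * X 3)
      = π₁₃ * (X 0 - X 2) + π₂₄ * (X 1 - X 3) := by
    rw [hu₁, hu₂, h₁₃, h₂₄, geom_aux, geom_aux, subst_aux n g hg, subst_aux n g hg (X 2)]
    ring
  have hne : (X 0 - X 2 : MvPolynomial (Fin 4) ℚ) ≠ 0 := by
    rw [sub_ne_zero]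
    intro h
    exact absurd (X_injective h) (by decide)
  clear hu₁ hu₂ h₁₃ h₂₄
  subst hP₀ hP₁ hQ₀ hQ₁ hU₀ hU₁
  simp only [Matrix.mul_fin_two]
  have e1 : X 2 * π₁₃ + -X 1 * π₂₄ = u₁ * (X 2 - X 1) + (X 0 * X 1 - X 2 * X 3) * a₁ := by
    apply mul_left_cancel₀ hne
    linear_combination (-X 2) * hW - (X 0 * X 1 - X 2 * X 3) * ha₁
  have e2 : -1 * π₁₃ + 1 * π₂₄ = u₂ * (X 2 - X 1) + (-X 0 - X 1 + X 2 + X 3) * a₁ := by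
    apply mul_left_cancel₀ hne
    linear_combination hW - (-X 0 - X 1 + X 2 + X 3) * ha₁
  have e3 : a₁ * (X 1 - X 3) + 1 * -π₁₃ = u₂ * -X 1 + -u₁ * 1 := by
    apply mul_left_cancel₀ hne
    linear_combination hW + (X 1 - X 3) * ha₁
  have e4 : a₁ * (X 0 - X 2) + 1 * π₂₄ = u₂ * X 2 + -u₁ * -1 := by
    linear_combination ha₁
  constructor
  · rw [e1, e2]
    congr! 3 <;> ring_nf
  · rw [e3, e4]
    congr! 3 <;> ring_nf
end
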